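/- arXiv:2202.11562 — 4 statements merged into one kernel-verified Lean document; each statement's English description precedes it below -/
import Mathlib

section
/- If exactly one label l_i performs a movement from its start position S to its end position E (both candidate positions of its point p_i), while every other label is stationary, the stationary labels are pairwise non-overlapping, and each stationary label is non-overlapping with both S and E, then at most one stationary label overlaps l_i at some moment during the movement. -/
open Set

/-- The closed axis-aligned unit square with lower-left corner `a`. -/
def unitSq (a : ℝ × ℝ) : Set (ℝ × ℝ) :=
  Set.Icc a.1 (a.1 + 1) ×ˢ Set.Icc a.2 (a.2 + 1)

/-- Two unit squares, given by their lower-left corners, overlap if their interiors intersect. -/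
def Overlap (a b : ℝ × ℝ) : Prop :=
  (interior (unitSq a) ∩ interior (unitSq b)).Nonempty

/-- `a` is the lower-left corner of one of the four candidate positions of point `p`
(the four closed unit squares having `p` as a corner). -/
def IsCandidate (p a : ℝ × ℝ) : Prop :=
  a = p ∨ a = (p.1 - 1, p.2) ∨ a = (p.1, p.2 - 1) ∨ a = (p.1 - 1, p.2 - 1)

/-- Two unit squares (given by lower-left corners) share an edge. -/
def SharesEdge (a b : ℝ × ℝ) : Prop :=
  (a.1 = b.1 ∧ (a.2 - b.2 = 1 ∨ b.2 - a.2 = 1)) ∨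
  (a.2 = b.2 ∧ (a.1 - b.1 = 1 ∨ b.1 - a.1 = 1))

/-- A movement of the unit-square label of point `p` from candidate position `S` to candidate
position `E`.  If `S` and `E` share an edge (a non-diagonal movement) we set `I = E` and the
label translates directly from `S` to `E`; if `S` and `E` are diagonally opposite (a diagonal
movement) the label translates through the specified intermediate candidate position `I`,
which shares an edge with both `S` and `E`. -/
structure Movement where
  p : ℝ × ℝ
  S : ℝ × ℝ
  I : ℝ × ℝ
  E : ℝ × ℝ
  candS : IsCandidate p S
  candI : IsCandidate p I
  candE : IsCandidate p E
  legs : (I = E ∧ SharesEdge S E) ∨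
    (SharesEdge S I ∧ SharesEdge I E ∧ S.1 ≠ E.1 ∧ S.2 ≠ E.2)

/-- A movement is diagonal if the start and end positions are diagonally opposite
(equivalently, the intermediate position differs from the end position). -/
def Movement.Diagonal (m : Movement) : Prop := m.I ≠ m.E

/-- Position (lower-left corner) of a moving label at time `t` after the start of its movement:
unit-speed axis-aligned translation, one unit of time per axis-aligned leg; the label rests at
its start position before the movement begins and at its end position after it is finished. -/
noncomputable def Movement.pos (m : Movement) (t : ℝ) : ℝ × ℝ :=
  if t ≤ 0 then m.S
  else if t ≤ 1 then m.S + t • (m.I - m.S)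
  else if t ≤ 2 then m.I + (t - 1) • (m.E - m.I)
  else m.E

/-- Duration of a movement: one unit of time per axis-aligned translation. -/
noncomputable def Movement.dur (m : Movement) : ℝ := if m.I = m.E then 1 else 2

theorem overlap_iff_aux (a b : ℝ × ℝ) :
    Overlap a b ↔ (a.1 < b.1 + 1 ∧ b.1 < a.1 + 1) ∧ (a.2 < b.2 + 1 ∧ b.2 < a.2 + 1) := by
  unfold Overlap unitSq
  rw [interior_prod_eq, interior_prod_eq, interior_Icc, interior_Icc, interior_Icc, interior_Icc]
  constructor
  · rintro ⟨⟨x, y⟩, h⟩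
    simp only [Set.mem_inter_iff, Set.mem_prod, Set.mem_Ioo] at h
    obtain ⟨⟨⟨h1, h2⟩, h3, h4⟩, ⟨h5, h6⟩, h7, h8⟩ := h
    refine ⟨⟨?_, ?_⟩, ?_, ?_⟩ <;> linarith
  · rintro ⟨⟨h1, h2⟩, h3, h4⟩
    refine ⟨((a.1 + b.1 + 1) / 2, (a.2 + b.2 + 1) / 2), ?_⟩
    simp only [Set.mem_inter_iff, Set.mem_prod, Set.mem_Ioo]
    refine ⟨⟨⟨?_, ?_⟩, ?_, ?_⟩, ⟨?_, ?_⟩, ?_, ?_⟩ <;> linarith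

/-- An overlap during the movement happens on one of the two legs, at leg parameter `s`. -/
theorem pos_cases_aux (m : Movement) (q : ℝ × ℝ) (hS : ¬ Overlap q m.S) (hE : ¬ Overlap q m.E)
    (h : ∃ t : ℝ, Overlap q (m.pos t)) :
    ∃ s : ℝ, 0 ≤ s ∧ s ≤ 1 ∧
      (Overlap q (m.S + s • (m.I - m.S)) ∨ Overlap q (m.I + s • (m.E - m.I))) := by
  obtain ⟨t, ht⟩ := h
  unfold Movement.pos at ht
  split_ifs at ht with h1 h2 h3
  · exact absurd ht hS
  · exact ⟨t, by linarith, h2, Or.inl ht⟩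
  · exact ⟨t - 1, by linarith, by linarith, Or.inr ht⟩
  · exact absurd ht hE

/-- A label in the way of a diagonal movement lies, up to the stated half-open tolerance,
in a half-open unit box of positions at the intermediate position. -/
theorem box_aux (d e x y s : ℝ) (hd : d = 1 ∨ d = -1) (he : e = 1 ∨ e = -1)
    (hs0 : 0 ≤ s) (hs1 : s ≤ 1)
    (hS : ¬ ((x < -d + 1 ∧ -d < x + 1) ∧ (y < 0 + 1 ∧ 0 < y + 1)))
    (hE : ¬ ((x < 0 + 1 ∧ 0 < x + 1) ∧ (y < e + 1 ∧ e < y + 1)))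
    (h : ((x < -d + s * d + 1 ∧ -d + s * d < x + 1) ∧ (y < 0 + 1 ∧ 0 < y + 1)) ∨
      ((x < 0 + 1 ∧ 0 < x + 1) ∧ (y < s * e + 1 ∧ s * e < y + 1))) :
    (0 ≤ d * x ∧ d * x < 1) ∧ (0 ≤ -e * y ∧ -e * y < 1) := by
  rcases hd with rfl | rfl <;> rcases he with rfl | rfl <;> grind

/-- If exactly one label performs a movement (with prescribed movement `m`) while every other
label is stationary, the stationary labels are pairwise non-overlapping, and each stationary
label overlaps neither the start nor the end position of the moving label, then at most one
stationary label overlaps the moving label at some moment during the movement. -/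
theorem at_most_one_stationary_overlap (m : Movement) {ι : Type*} (stat : ι → ℝ × ℝ)
    (hfree : ∀ i j : ι, i ≠ j → ¬ Overlap (stat i) (stat j))
    (hS : ∀ i, ¬ Overlap (stat i) m.S)
    (hE : ∀ i, ¬ Overlap (stat i) m.E) :
    {i : ι | ∃ t : ℝ, Overlap (stat i) (m.pos t)}.Subsingleton := by
  intro i hi j hj
  by_contra hij
  have hi' := pos_cases_aux m _ (hS i) (hE i) hi
  have hj' := pos_cases_aux m _ (hS j) (hE j) hj
  have hf := hfree i j hij
  have hSi := hS i
  have hSj := hS j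
  have hEi := hE i
  have hEj := hE j
  have legs := m.legs
  clear hi hj hS hE hfree
  generalize m.S = S at *
  generalize m.I = I at *
  generalize m.E = E at *
  generalize stat i = q at *
  generalize stat j = r at *
  obtain ⟨s, hs0, hs1, hs⟩ := hi'
  obtain ⟨t, ht0, ht1, ht⟩ := hj'
  obtain ⟨S1, S2⟩ := S
  obtain ⟨I1, I2⟩ := I
  obtain ⟨E1, E2⟩ := E
  obtain ⟨q1, q2⟩ := q
  obtain ⟨r1, r2⟩ := r
  simp only [overlap_iff_aux, SharesEdge, Prod.mk.injEq, Prod.fst_add, Prod.snd_add, Prod.smul_fst,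
    Prod.smul_snd, Prod.fst_sub, Prod.snd_sub, smul_eq_mul, ne_eq] at *
  rcases legs with ⟨⟨rfl, rfl⟩, h⟩ | ⟨h1, h2, h3, h4⟩
  · clear ht hSj hEj hf
    rcases h with ⟨rfl, h | h⟩ | ⟨rfl, h | h⟩
    · obtain rfl : S2 = I2 + 1 := by linarith
      grind
    · obtain rfl : I2 = S2 + 1 := by linarith
      grind
    · obtain rfl : S1 = I1 + 1 := by linarith
      grind
    · obtain rfl : I1 = S1 + 1 := by linarith
      grind
  · rcases h1 with ⟨rfl, h1⟩ | ⟨rfl, h1⟩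
    · rcases h2 with ⟨rfl, h2⟩ | ⟨rfl, h2⟩
      · exact absurd rfl h3
      -- first leg vertical, second leg horizontal
      have hd : I2 - S2 = 1 ∨ I2 - S2 = -1 := by grind
      have he : E1 - S1 = 1 ∨ E1 - S1 = -1 := by grind
      have A := box_aux (I2 - S2) (E1 - S1) (q2 - I2) (q1 - S1) s hd he hs0 hs1
        (by grind) (by grind) (by grind)
      have B := box_aux (I2 - S2) (E1 - S1) (r2 - I2) (r1 - S1) t hd he ht0 ht1
        (by grind) (by grind) (by grind)
      rcases hd with hd | hd <;> rcases he with he | he <;> rw [hd, he] at A B <;>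
        exact hf ⟨⟨by linarith, by linarith⟩, by linarith, by linarith⟩
    · rcases h2 with ⟨rfl, h2⟩ | ⟨rfl, h2⟩
      swap
      · exact absurd rfl h4
      have hd : I1 - S1 = 1 ∨ I1 - S1 = -1 := by grind
      have he : E2 - S2 = 1 ∨ E2 - S2 = -1 := by grind
      have A := box_aux (I1 - S1) (E2 - S2) (q1 - I1) (q2 - S2) s hd he hs0 hs1
        (by grind) (by grind) (by grind)
      have B := box_aux (I1 - S1) (E2 - S2) (r1 - I1) (r2 - S2) t hd he ht0 ht1
        (by grind) (by grind) (by grind)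
      rcases hd with hd | hd <;> rcases he with he | he <;> rw [hd, he] at A B <;>
        exact hf ⟨⟨by linarith, by linarith⟩, by linarith, by linarith⟩
end

section
/- In a consecutive transition, a moving label whose movement is diagonal overlaps at most 14 other labels during the entire transition. -/
open Set

/-- A transition instance: finitely many stationary labels (given by their lower-left corners)
and `n` moving labels, each with a prescribed movement, such that the labeling `L₁` formed by
the stationary labels together with the start positions of the moving labels is overlap-free,
and the labeling `L₂` formed by the stationary labels together with the end positions of the
moving labels is overlap-free. -/
structure TransitionInstance (k n : ℕ) where
  stat : Fin k → ℝ × ℝ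
  mov : Fin n → Movement
  free_start : ∀ a b : Fin k ⊕ Fin n, a ≠ b →
    ¬ Overlap (Sum.elim stat (fun j => (mov j).S) a)
      (Sum.elim stat (fun j => (mov j).S) b)
  free_end : ∀ a b : Fin k ⊕ Fin n, a ≠ b →
    ¬ Overlap (Sum.elim stat (fun j => (mov j).E) a)
      (Sum.elim stat (fun j => (mov j).E) b)

/-- A schedule `τ` of starting times is consecutive if the execution intervals of the movements
are pairwise non-overlapping, i.e. the movements are executed one after another in some order. -/
def Consecutive {k n : ℕ} (T : TransitionInstance k n) (τ : Fin n → ℝ) : Prop :=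
  ∀ i j : Fin n, i ≠ j →
    τ i + (T.mov i).dur ≤ τ j ∨ τ j + (T.mov j).dur ≤ τ i

/-- Position (lower-left corner) of each label at global time `t`, when moving label `j`
starts its movement at time `τ j`; stationary labels never move. -/
noncomputable def traj {k n : ℕ} (T : TransitionInstance k n) (τ : Fin n → ℝ) (t : ℝ) :
    Fin k ⊕ Fin n → ℝ × ℝ :=
  Sum.elim T.stat (fun j => (T.mov j).pos (t - τ j))

/-- The number of overlaps during the transition: the number of unordered pairs of distinct
labels whose interiors intersect at some moment. -/
noncomputable def overlapCount {k n : ℕ} (T : TransitionInstance k n) (τ : Fin n → ℝ) : ℕ :=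
  Set.ncard {q : Sym2 (Fin k ⊕ Fin n) | ∃ a b : Fin k ⊕ Fin n,
    q = s(a, b) ∧ a ≠ b ∧ ∃ t : ℝ, Overlap (traj T τ t a) (traj T τ t b)}

/-- Overlap of unit squares in terms of lower-left corners. -/
lemma overlap_iff (a b : ℝ × ℝ) : Overlap a b ↔ |a.1 - b.1| < 1 ∧ |a.2 - b.2| < 1 := by
  unfold Overlap unitSq
  rw [interior_prod_eq, interior_prod_eq, interior_Icc, interior_Icc, interior_Icc, interior_Icc]
  constructor
  · rintro ⟨⟨x, y⟩, ⟨⟨h1, h2⟩, ⟨h3, h4⟩⟩, ⟨⟨h5, h6⟩, ⟨h7, h8⟩⟩⟩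
    simp only at *
    constructor <;> rw [abs_lt] <;> constructor <;> linarith
  · rintro ⟨h1, h2⟩
    rw [abs_lt] at h1 h2
    refine ⟨((a.1 + b.1 + 1) / 2, (a.2 + b.2 + 1) / 2), ⟨⟨?_, ?_⟩, ⟨?_, ?_⟩⟩, ⟨⟨?_, ?_⟩, ⟨?_, ?_⟩⟩⟩ <;>
      simp only <;> linarith

lemma overlap_comm {a b : ℝ × ℝ} (h : Overlap a b) : Overlap b a := by
  rw [overlap_iff] at *
  rwa [abs_sub_comm b.1, abs_sub_comm b.2]

/-- The class of a real number: `2 n` for an integer `n`, and `2 n + 1` on `(n, n+1)`. -/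
noncomputable def cls (x : ℝ) : ℤ := ⌊x⌋ + ⌈x⌉

lemma cls_add_one (x : ℝ) : cls (x + 1) = cls x + 2 := by
  unfold cls; rw [Int.floor_add_one, Int.ceil_add_one]; ring

lemma cls_sub_one (x : ℝ) : cls (x - 1) = cls x - 2 := by
  unfold cls; rw [Int.floor_sub_one, Int.ceil_sub_one]; ring

lemma cls_int (n : ℤ) : cls (n : ℝ) = 2 * n := by
  unfold cls; rw [Int.floor_intCast, Int.ceil_intCast]; ring

lemma cls_zero : cls 0 = 0 := by simpa using cls_int 0

lemma cls_neg_one : cls (-1) = -2 := by simpa using cls_int (-1)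

lemma cls_ge {x y : ℝ} (h : y + 1 ≤ x) : cls y + 2 ≤ cls x := by
  have h1 := Int.floor_mono h
  have h2 := Int.ceil_mono h
  rw [Int.floor_add_one] at h1
  rw [Int.ceil_add_one] at h2
  unfold cls; omega

lemma abs_lt_of_cls {x y : ℝ} (h : |cls x - cls y| < 2) : |x - y| < 1 := by
  rw [abs_lt] at *
  constructor
  · by_contra hc
    have := cls_ge (x := y) (y := x) (by linarith)
    omega
  · by_contra hc
    have := cls_ge (x := x) (y := y) (by linarith)
    omega

lemma cls_of_abs_lt {x : ℝ} {n : ℤ} (h : |x - n| < 1) : |cls x - 2 * n| < 2 := by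
  rw [abs_lt] at h
  have h1 : n - 1 ≤ ⌊x⌋ := Int.le_floor.2 (by push_cast; linarith)
  have h2 : ⌊x⌋ < n + 1 := Int.floor_lt.2 (by push_cast; linarith)
  have h3 : n - 1 < ⌈x⌉ := Int.lt_ceil.2 (by push_cast; linarith)
  have h4 : ⌈x⌉ ≤ n + 1 := Int.ceil_le.2 (by push_cast; linarith)
  rw [abs_lt]; unfold cls; omega

/-- Overlap on the class grid. -/
def GOv (a b : ℤ × ℤ) : Prop := |a.1 - b.1| < 2 ∧ |a.2 - b.2| < 2

instance (a b : ℤ × ℤ) : Decidable (GOv a b) := by unfold GOv; infer_instance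

/-- The classes of a position relative to `c`, after an axis reflection and possibly a swap. -/
noncomputable def phi (sw : Bool) (σ ρ : ℝ) (c a : ℝ × ℝ) : ℤ × ℤ :=
  if sw then (cls (ρ * (a.2 - c.2)), cls (σ * (a.1 - c.1)))
  else (cls (σ * (a.1 - c.1)), cls (ρ * (a.2 - c.2)))

lemma abs_sign {σ : ℝ} (h : σ = 1 ∨ σ = -1) (x y c : ℝ) :
    |σ * (x - c) - σ * (y - c)| = |x - y| := by
  rcases h with rfl | rfl
  · congr 1; ring
  · rw [abs_sub_comm x y]; congr 1; ring

lemma phi_gov {sw : Bool} {σ ρ : ℝ} (hσ : σ = 1 ∨ σ = -1) (hρ : ρ = 1 ∨ ρ = -1)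
    (c a b : ℝ × ℝ) (h : GOv (phi sw σ ρ c a) (phi sw σ ρ c b)) : Overlap a b := by
  rw [overlap_iff, ← abs_sign hσ a.1 b.1 c.1, ← abs_sign hρ a.2 b.2 c.2]
  cases sw
  · exact ⟨abs_lt_of_cls h.1, abs_lt_of_cls h.2⟩
  · exact ⟨abs_lt_of_cls h.2, abs_lt_of_cls h.1⟩

lemma gov_phi {sw : Bool} {σ ρ : ℝ} (hσ : σ = 1 ∨ σ = -1) (hρ : ρ = 1 ∨ ρ = -1)
    (c a b : ℝ × ℝ) {m n : ℤ} (hm : σ * (b.1 - c.1) = m) (hn : ρ * (b.2 - c.2) = n)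
    (h : Overlap a b) : GOv (phi sw σ ρ c a) (phi sw σ ρ c b) := by
  rw [overlap_iff, ← abs_sign hσ a.1 b.1 c.1, ← abs_sign hρ a.2 b.2 c.2] at h
  have h1 : |cls (σ * (a.1 - c.1)) - cls (σ * (b.1 - c.1))| < 2 := by
    rw [hm, cls_int]; rw [hm] at h; exact cls_of_abs_lt h.1
  have h2 : |cls (ρ * (a.2 - c.2)) - cls (ρ * (b.2 - c.2))| < 2 := by
    rw [hn, cls_int]; rw [hn] at h; exact cls_of_abs_lt h.2
  cases sw
  · exact ⟨h1, h2⟩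
  · exact ⟨h2, h1⟩

lemma cls_step {σ : ℝ} (h : σ = 1 ∨ σ = -1) {x y : ℝ} (c : ℝ) (hxy : x - y = 1 ∨ y - x = 1) :
    ∃ d : ℤ, (d = 2 ∨ d = -2) ∧ cls (σ * (y - c)) = cls (σ * (x - c)) + d := by
  have hd : σ * (y - c) = σ * (x - c) + 1 ∨ σ * (y - c) = σ * (x - c) - 1 := by
    rcases h with rfl | rfl <;> rcases hxy with h | h
    · right; linarith
    · left; linarith
    · left; linarith
    · right; linarith
  rcases hd with hd | hd
  · exact ⟨2, Or.inl rfl, by rw [hd, cls_add_one]⟩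
  · exact ⟨-2, Or.inr rfl, by rw [hd, cls_sub_one]; ring⟩

/-- The possible movements on the class grid, described by the increments of the two legs. -/
def gsteps : List ((ℤ × ℤ) × (ℤ × ℤ)) :=
  [((0, 0), (0, 0)), ((2, 0), (0, 0)), ((-2, 0), (0, 0)), ((0, 2), (0, 0)), ((0, -2), (0, 0)),
   ((2, 0), (0, 2)), ((2, 0), (0, -2)), ((-2, 0), (0, 2)), ((-2, 0), (0, -2)),
   ((0, 2), (2, 0)), ((0, -2), (2, 0)), ((0, 2), (-2, 0)), ((0, -2), (-2, 0))]

/-- `S → I → E` is a possible movement on the class grid. -/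
def GMove (S I E : ℤ × ℤ) : Prop := ∃ q ∈ gsteps, I = S + q.1 ∧ E = S + q.1 + q.2

lemma phi_edge (sw : Bool) {σ ρ : ℝ} (hσ : σ = 1 ∨ σ = -1) (hρ : ρ = 1 ∨ ρ = -1)
    (c a b : ℝ × ℝ) (h : SharesEdge a b) :
    GMove (phi sw σ ρ c a) (phi sw σ ρ c b) (phi sw σ ρ c b) := by
  rcases h with ⟨h1, h2⟩ | ⟨h1, h2⟩
  · obtain ⟨d, hd, he⟩ := cls_step hρ c.2 h2
    cases sw <;> simp only [phi, h1, he] <;> rcases hd with rfl | rfl <;> simp [GMove, gsteps]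
  · obtain ⟨d, hd, he⟩ := cls_step hσ c.1 h2
    cases sw <;> simp only [phi, h1, he] <;> rcases hd with rfl | rfl <;> simp [GMove, gsteps]

lemma phi_diag (sw : Bool) {σ ρ : ℝ} (hσ : σ = 1 ∨ σ = -1) (hρ : ρ = 1 ∨ ρ = -1)
    (c S I E : ℝ × ℝ) (h : SharesEdge S I) (h' : SharesEdge I E) (n1 : S.1 ≠ E.1)
    (n2 : S.2 ≠ E.2) :
    GMove (phi sw σ ρ c S) (phi sw σ ρ c I) (phi sw σ ρ c E) := by
  rcases h with ⟨h1, h2⟩ | ⟨h1, h2⟩ <;> rcases h' with ⟨h3, h4⟩ | ⟨h3, h4⟩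
  · exact absurd (h1.trans h3) n1
  · obtain ⟨d, hd, he⟩ := cls_step hρ c.2 h2
    obtain ⟨d', hd', he'⟩ := cls_step hσ c.1 h4
    cases sw <;> simp only [phi, h1, ← h3, he, he'] <;> rcases hd with rfl | rfl <;>
      rcases hd' with rfl | rfl <;> simp [GMove, gsteps]
  · obtain ⟨d, hd, he⟩ := cls_step hσ c.1 h2
    obtain ⟨d', hd', he'⟩ := cls_step hρ c.2 h4
    cases sw <;> simp only [phi, h1, ← h3, he, he'] <;> rcases hd with rfl | rfl <;>
      rcases hd' with rfl | rfl <;> simp [GMove, gsteps]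
  · exact absurd (h1.trans h3) n2

lemma phi_move (sw : Bool) {σ ρ : ℝ} (hσ : σ = 1 ∨ σ = -1) (hρ : ρ = 1 ∨ ρ = -1)
    (c : ℝ × ℝ) (m : Movement) :
    GMove (phi sw σ ρ c m.S) (phi sw σ ρ c m.I) (phi sw σ ρ c m.E) := by
  rcases m.legs with ⟨h1, h2⟩ | ⟨h1, h2, h3, h4⟩
  · rw [h1]; exact phi_edge sw hσ hρ c _ _ h2
  · exact phi_diag sw hσ hρ c _ _ _ h1 h2 h3 h4

/-- A diagonal movement can be normalised: classes start at `(-2,-2)`, pass `(0,-2)`,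
and end at `(0,0)`. -/
lemma exists_phi (m : Movement) (hm : m.Diagonal) : ∃ φ : ℝ × ℝ → ℤ × ℤ,
    φ m.S = (-2, -2) ∧ φ m.I = (0, -2) ∧ φ m.E = (0, 0) ∧
    (∀ a b, GOv (φ a) (φ b) → Overlap a b) ∧
    (∀ a, Overlap a m.S → GOv (φ a) (-2, -2)) ∧
    (∀ a, Overlap a m.I → GOv (φ a) (0, -2)) ∧
    (∀ a, Overlap a m.E → GOv (φ a) (0, 0)) ∧
    (∀ m' : Movement, GMove (φ m'.S) (φ m'.I) (φ m'.E)) := by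
  rcases m.legs with ⟨h1, _⟩ | ⟨h1, h2, h3, h4⟩
  · exact absurd h1 hm
  have key : ∀ sw : Bool, ∀ σ ρ : ℝ, (σ = 1 ∨ σ = -1) → (ρ = 1 ∨ ρ = -1) →
      σ * (m.S.1 - m.E.1) = -1 → ρ * (m.S.2 - m.E.2) = -1 →
      σ * (m.I.1 - m.E.1) = (if sw then -1 else 0) →
      ρ * (m.I.2 - m.E.2) = (if sw then 0 else -1) → 
      ∃ φ : ℝ × ℝ → ℤ × ℤ,
        φ m.S = (-2, -2) ∧ φ m.I = (0, -2) ∧ φ m.E = (0, 0) ∧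
        (∀ a b, GOv (φ a) (φ b) → Overlap a b) ∧
        (∀ a, Overlap a m.S → GOv (φ a) (-2, -2)) ∧
        (∀ a, Overlap a m.I → GOv (φ a) (0, -2)) ∧
        (∀ a, Overlap a m.E → GOv (φ a) (0, 0)) ∧
        (∀ m' : Movement, GMove (φ m'.S) (φ m'.I) (φ m'.E)) := by
    intro sw σ ρ hσ hρ e1 e2 e3 e4
    have pS : phi sw σ ρ m.E m.S = (-2, -2) := by
      cases sw <;> simp [phi, e1, e2, cls_neg_one]
    have pI : phi sw σ ρ m.E m.I = (0, -2) := by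
      cases sw <;> simp only [phi, e3, e4, if_true, if_false, Bool.false_eq_true, cls_neg_one,
        cls_zero]
    have pE : phi sw σ ρ m.E m.E = (0, 0) := by
      cases sw <;> simp [phi, cls_zero]
    refine ⟨phi sw σ ρ m.E, pS, pI, pE, fun a b => phi_gov hσ hρ _ a b, fun a h => ?_,
      fun a h => ?_, fun a h => ?_, fun m' => phi_move sw hσ hρ _ m'⟩
    · rw [← pS]
      exact gov_phi hσ hρ _ _ _ (m := -1) (n := -1) (by rw [e1]; simp) (by rw [e2]; simp) h
    · rw [← pI]
      exact gov_phi hσ hρ _ _ _ (m := if sw then -1 else 0) (n := if sw then 0 else -1)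
        (by rw [e3]; cases sw <;> simp) (by rw [e4]; cases sw <;> simp) h
    · have := gov_phi (sw := sw) hσ hρ m.E a m.E (m := 0) (n := 0) (by simp) (by simp) h
      rwa [pE] at this
  rcases h1 with ⟨a1, a2⟩ | ⟨a1, a2⟩ <;> rcases h2 with ⟨b1, b2⟩ | ⟨b1, b2⟩
  · exact absurd (a1.trans b1) h3
  · refine key true (m.E.1 - m.S.1) (m.E.2 - m.S.2) ?_ ?_ ?_ ?_ ?_ ?_
    · rw [a1]; rcases b2 with h | h
      · right; linarith
      · left; linarith
    · rw [← b1]; rcases a2 with h | h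
      · right; linarith
      · left; linarith
    · rw [a1]; rcases b2 with h | h <;> nlinarith
    · rw [← b1]; rcases a2 with h | h <;> nlinarith
    · rw [a1]; simp only [if_true]; rcases b2 with h | h <;> nlinarith
    · simp [b1]
  · refine key false (m.E.1 - m.S.1) (m.E.2 - m.S.2) ?_ ?_ ?_ ?_ ?_ ?_
    · rw [← b1]; rcases a2 with h | h
      · right; linarith
      · left; linarith
    · rw [a1]; rcases b2 with h | h
      · right; linarith
      · left; linarith
    · rw [← b1]; rcases a2 with h | h <;> nlinarith
    · rw [a1]; rcases b2 with h | h <;> nlinarith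
    · simp [b1]
    · rw [a1]; simp only [Bool.false_eq_true, if_false]; rcases b2 with h | h <;> nlinarith
  · exact absurd (a1.trans b1) h4

/-- The fourteen cells: `(false, x, y)` is a cell for start positions, `(true, x, y)` for end
positions, consisting of the classes `{x, x+1} × {y, y+1}`. -/
def cells : Finset (Bool × ℤ × ℤ) :=
  {(false, -5, -3), (false, -3, -5), (false, -3, 0), (false, -2, 0), (false, 0, -3),
   (false, 0, -1), (false, 0, 1), (false, 0, 2), (false, 2, 0), (true, -3, -3), (true, -3, -1),
   (true, -3, 1), (true, -2, -3), (true, 0, -3)}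

/-- The class `a` lies in the cell with corner `w`. -/
def InCell (a w : ℤ × ℤ) : Prop :=
  w.1 ≤ a.1 ∧ a.1 < w.1 + 2 ∧ w.2 ≤ a.2 ∧ a.2 < w.2 + 2

instance (a w : ℤ × ℤ) : Decidable (InCell a w) := by unfold InCell; infer_instance

lemma gov_of_inCell {a b w : ℤ × ℤ} (h : InCell a w) (h' : InCell b w) : GOv a b := by
  unfold InCell at *; unfold GOv; rw [abs_lt, abs_lt]; omega

/-- The overlap condition of a label with classes `S`, `I`, `E`. -/
def Hit (S I E : ℤ × ℤ) : Prop :=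
  GOv S (0, -2) ∨ GOv S (0, 0) ∨ GOv I (0, 0) ∨ GOv E (-2, -2) ∨ GOv E (0, -2) ∨ GOv I (-2, -2)

instance (S I E : ℤ × ℤ) : Decidable (Hit S I E) := by unfold Hit; infer_instance

lemma pierce_finite : ∀ q ∈ gsteps, ∀ x ∈ Finset.Icc (-5 : ℤ) 3, ∀ y ∈ Finset.Icc (-5 : ℤ) 3,
    ¬ GOv (x, y) (-2, -2) → ¬ GOv ((x, y) + q.1 + q.2) (0, 0) →
    Hit (x, y) ((x, y) + q.1) ((x, y) + q.1 + q.2) →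
    ∃ w ∈ cells, InCell (if w.1 then (x, y) + q.1 + q.2 else (x, y)) w.2 := by
  decide +kernel

lemma pierce {S I E : ℤ × ℤ} (hm : GMove S I E) (h1 : ¬ GOv S (-2, -2)) (h2 : ¬ GOv E (0, 0))
    (h : Hit S I E) : ∃ w ∈ cells, InCell (if w.1 then E else S) w.2 := by
  obtain ⟨q, hq, rfl, rfl⟩ := hm
  obtain ⟨x, y⟩ := S
  have hb : (-5 ≤ x ∧ x ≤ 3) ∧ (-5 ≤ y ∧ y ≤ 3) := by
    simp only [gsteps, List.mem_cons, List.not_mem_nil, or_false] at hq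
    unfold Hit GOv at h
    simp only [abs_lt] at h
    rcases hq with rfl | rfl | rfl | rfl | rfl | rfl | rfl | rfl | rfl | rfl | rfl | rfl | rfl <;>
      simp only [Prod.mk_add_mk] at h <;> omega
  exact pierce_finite q hq x (Finset.mem_Icc.2 hb.1) y (Finset.mem_Icc.2 hb.2) h1 h2 h

/-- On a unit axis-aligned leg, an overlap occurs at one of the end points. -/
lemma leg_overlap {A B X : ℝ × ℝ} (h : SharesEdge A B ∨ A = B) {s : ℝ} (h0 : 0 ≤ s) (h1 : s ≤ 1)
    (ho : Overlap (A + s • (B - A)) X) : Overlap A X ∨ Overlap B X := by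
  rcases h with h | rfl
  swap
  · left; simpa using ho
  by_contra hc
  push Not at hc
  obtain ⟨c1, c2⟩ := hc
  rw [overlap_iff] at *
  simp only [Prod.fst_add, Prod.snd_add, Prod.smul_fst, Prod.smul_snd, Prod.fst_sub, Prod.snd_sub,
    smul_eq_mul, abs_lt] at *
  obtain ⟨⟨o1, o2⟩, ⟨o3, o4⟩⟩ := ho
  have aux : ∀ a b x : ℝ, (a - b = 1 ∨ b - a = 1) → -1 < a + s * (b - a) - x →
      a + s * (b - a) - x < 1 → (-1 < a - x ∧ a - x < 1) ∨ (-1 < b - x ∧ b - x < 1) := by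
    intro a b x hab l1 l2
    rcases hab with hab | hab
    · have : b = a - 1 := by linarith
      subst this
      have e : s * (a - 1 - a) = -s := by ring
      rw [e] at l1 l2
      by_cases hh : a - x < 1
      · left; constructor <;> linarith
      · right; constructor <;> linarith
    · have : b = a + 1 := by linarith
      subst this
      have e : s * (a + 1 - a) = s := by ring
      rw [e] at l1 l2
      by_cases hh : -1 < a - x
      · left; constructor <;> linarith
      · right; constructor <;> linarith
  rcases h with ⟨e, h⟩ | ⟨e, h⟩
  · rw [e] at o1 o2 c1
    simp only [sub_self, mul_zero, add_zero] at o1 o2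
    rcases aux _ _ _ h o3 o4 with h | h
    · exact c1 ⟨⟨o1, o2⟩, h⟩
    · exact c2 ⟨⟨o1, o2⟩, h⟩
  · rw [e] at o3 o4 c1
    simp only [sub_self, mul_zero, add_zero] at o3 o4
    rcases aux _ _ _ h o1 o2 with h | h
    · exact c1 ⟨h, ⟨o3, o4⟩⟩
    · exact c2 ⟨h, ⟨o3, o4⟩⟩

/-- If a moving label overlaps a fixed square, then it does so at one of its positions. -/
lemma pos_overlap (m : Movement) {t : ℝ} {X : ℝ × ℝ} (h : Overlap (m.pos t) X) :
    Overlap m.S X ∨ Overlap m.I X ∨ Overlap m.E X := by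
  have e1 : SharesEdge m.S m.I ∨ m.S = m.I := by
    rcases m.legs with ⟨h1, h2⟩ | ⟨h1, h2, _⟩
    · left; rwa [h1]
    · left; exact h1
  have e2 : SharesEdge m.I m.E ∨ m.I = m.E := by
    rcases m.legs with ⟨h1, h2⟩ | ⟨h1, h2, _⟩
    · right; exact h1
    · left; exact h2
  unfold Movement.pos at h
  split_ifs at h with h1 h2 h3
  · exact Or.inl h
  · rcases leg_overlap e1 (by linarith) h2 h with h | h
    · exact Or.inl h
    · exact Or.inr (Or.inl h)
  · rcases leg_overlap e2 (by linarith) (by linarith) h with h | h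
    · exact Or.inr (Or.inl h)
    · exact Or.inr (Or.inr h)
  · exact Or.inr (Or.inr h)

lemma pos_before (m : Movement) {t : ℝ} (h : t ≤ 0) : m.pos t = m.S := by
  unfold Movement.pos; rw [if_pos h]

lemma pos_after (m : Movement) {t : ℝ} (h : m.dur ≤ t) : m.pos t = m.E := by
  unfold Movement.dur at h
  unfold Movement.pos
  split_ifs at h with h0
  · rw [if_neg (by linarith)]
    split_ifs with h1 h2
    · have : t = 1 := le_antisymm h1 h
      rw [this, h0]; simp
    · rw [h0]; simp
    · rfl
  · rw [if_neg (by linarith), if_neg (by linarith)]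
    split_ifs with h2
    · have : t = 2 := le_antisymm h2 h
      rw [this]; norm_num
    · rfl

/-- Every label overlapping a diagonally moving label satisfies the hypotheses of `pierce`. -/
lemma hit_of_overlap {k n : ℕ} (T : TransitionInstance k n) (τ : Fin n → ℝ)
    (hcons : Consecutive T τ) (j : Fin n) (φ : ℝ × ℝ → ℤ × ℤ)
    (fS : φ (T.mov j).S = (-2, -2)) (fE : φ (T.mov j).E = (0, 0))
    (hO : ∀ a b, GOv (φ a) (φ b) → Overlap a b)
    (hS : ∀ a, Overlap a (T.mov j).S → GOv (φ a) (-2, -2))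
    (hI : ∀ a, Overlap a (T.mov j).I → GOv (φ a) (0, -2))
    (hE : ∀ a, Overlap a (T.mov j).E → GOv (φ a) (0, 0))
    (hM : ∀ m' : Movement, GMove (φ m'.S) (φ m'.I) (φ m'.E))
    (a : Fin k ⊕ Fin n) (ha : a ≠ Sum.inr j) (t : ℝ)
    (hov : Overlap (traj T τ t a) (traj T τ t (Sum.inr j))) :
    ∃ w ∈ cells, InCell (if w.1 then φ (Sum.elim T.stat (fun j => (T.mov j).E) a)
      else φ (Sum.elim T.stat (fun j => (T.mov j).S) a)) w.2 := by
  have n1 := T.free_start a (Sum.inr j) ha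
  have n2 := T.free_end a (Sum.inr j) ha
  simp only [Sum.elim_inr] at n1 n2
  have g1 : ¬ GOv (φ (Sum.elim T.stat (fun j => (T.mov j).S) a)) (-2, -2) := fun h =>
    n1 (hO _ _ (by rw [fS]; exact h))
  have g2 : ¬ GOv (φ (Sum.elim T.stat (fun j => (T.mov j).E) a)) (0, 0) := fun h =>
    n2 (hO _ _ (by rw [fE]; exact h))
  rcases a with a | i
  · simp only [traj, Sum.elim_inl, Sum.elim_inr] at *
    refine pierce (I := φ (T.stat a)) ⟨((0, 0), (0, 0)), by simp [gsteps],
      by ext <;> simp, by ext <;> simp⟩ g1 g2 ?_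
    rcases pos_overlap _ (overlap_comm hov) with h | h | h
    · exact absurd (overlap_comm h) n1
    · exact Or.inl (hI _ (overlap_comm h))
    · exact absurd (overlap_comm h) n2
  · simp only [traj, Sum.elim_inr] at *
    refine pierce (hM (T.mov i)) g1 g2 ?_
    unfold Hit
    rcases hcons i j (fun h => ha (by rw [h])) with hc | hc
    · rcases le_total t (τ j) with ht | ht
      · rw [pos_before (T.mov j) (by linarith)] at hov
        rcases pos_overlap _ hov with h | h | h
        · exact absurd h n1
        · have := hS _ h; tauto
        · have := hS _ h; tauto
      · rw [pos_after (T.mov i) (by linarith)] at hov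
        rcases pos_overlap _ (overlap_comm hov) with h | h | h
        · have := hS _ (overlap_comm h); tauto
        · have := hI _ (overlap_comm h); tauto
        · exact absurd (overlap_comm h) n2
    · rcases le_total t (τ i) with ht | ht
      · rw [pos_before (T.mov i) (by linarith)] at hov
        rcases pos_overlap _ (overlap_comm hov) with h | h | h
        · exact absurd (overlap_comm h) n1
        · have := hI _ (overlap_comm h); tauto
        · have := hE _ (overlap_comm h); tauto
      · rw [pos_after (T.mov j) (by linarith)] at hov
        rcases pos_overlap _ hov with h | h | h
        · have := hE _ h; tauto
        · have := hE _ h; tauto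
        · exact absurd h n2

/-- In a consecutive transition, a moving label whose movement is diagonal overlaps at most `14`
other labels during the entire transition. -/
theorem consecutive_diagonal_degree_le {k n : ℕ} (T : TransitionInstance k n) (τ : Fin n → ℝ)
    (hcons : Consecutive T τ) (j : Fin n) (hdiag : (T.mov j).Diagonal) :
    {a : Fin k ⊕ Fin n | a ≠ Sum.inr j ∧
      ∃ t : ℝ, Overlap (traj T τ t a) (traj T τ t (Sum.inr j))}.ncard ≤ 14 := by
  classical
  obtain ⟨φ, fS, _, fE, hO, hS, hI, hE, hM⟩ := exists_phi (T.mov j) hdiag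
  have key : ∀ a : Fin k ⊕ Fin n, ∃ w : Bool × ℤ × ℤ,
      (a ≠ Sum.inr j ∧ ∃ t : ℝ, Overlap (traj T τ t a) (traj T τ t (Sum.inr j))) →
      w ∈ cells ∧ InCell (if w.1 then φ (Sum.elim T.stat (fun j => (T.mov j).E) a)
        else φ (Sum.elim T.stat (fun j => (T.mov j).S) a)) w.2 := by
    intro a
    by_cases h : a ≠ Sum.inr j ∧ ∃ t : ℝ, Overlap (traj T τ t a) (traj T τ t (Sum.inr j))
    · obtain ⟨ha, t, ht⟩ := h
      obtain ⟨w, hw, hc⟩ := hit_of_overlap T τ hcons j φ fS fE hO hS hI hE hM a ha t ht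
      exact ⟨w, fun _ => ⟨hw, hc⟩⟩
    · exact ⟨(true, 0, 0), fun h' => absurd h' h⟩
  choose f hf using key
  have hcard : (cells : Set (Bool × ℤ × ℤ)).ncard = 14 := by
    rw [Set.ncard_coe_finset]; rfl
  rw [← hcard]
  refine Set.ncard_le_ncard_of_injOn f (fun a ha => (hf a ha).1) ?_ (Finset.finite_toSet _)
  intro a ha b hb hab
  by_contra hne
  have h1 := (hf a ha).2
  have h2 := (hf b hb).2
  rw [← hab] at h2
  have h3 := gov_of_inCell h1 h2
  by_cases hw : (f a).1 = true
  · simp only [hw, if_true] at h3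
    exact T.free_end a b hne (hO _ _ h3)
  · simp only [hw] at h3
    exact T.free_start a b hne (hO _ _ h3)
end

section
/- In a simultaneous transition with n moving labels, at most 6n overlaps occur during the transition. -/
open Set

namespace LabelAux

/-- Numerical form of the overlap of two unit squares. -/
def Ov (a b : ℝ × ℝ) : Prop := |a.1 - b.1| < 1 ∧ |a.2 - b.2| < 1

theorem overlap_iff (a b : ℝ × ℝ) : Overlap a b ↔ Ov a b := by
  unfold Overlap unitSq Ov
  simp only [interior_prod_eq, interior_Icc]
  constructor
  · rintro ⟨x, ⟨⟨h1, h2⟩, h3, h4⟩, ⟨h5, h6⟩, h7, h8⟩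
    constructor <;> rw [abs_lt] <;> constructor <;> linarith
  · rintro ⟨h1, h2⟩
    rw [abs_lt] at h1 h2
    refine ⟨((a.1 + b.1 + 1) / 2, (a.2 + b.2 + 1) / 2), ?_, ?_⟩ <;>
      simp only [Set.mem_prod, Set.mem_Ioo] <;> refine ⟨⟨?_, ?_⟩, ?_, ?_⟩ <;> linarith

/-- An axis-aligned unit displacement, or no displacement. -/
def IsDir (d : ℝ × ℝ) : Prop :=
  d = (1, 0) ∨ d = (-1, 0) ∨ d = (0, 1) ∨ d = (0, -1) ∨ d = (0, 0)

def fwd (d a b : ℝ × ℝ) : ℝ := d.1 * (b.1 - a.1) + d.2 * (b.2 - a.2)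

def side (d a b : ℝ × ℝ) : ℝ := d.1 * (b.2 - a.2) - d.2 * (b.1 - a.1)

/-- `b` is directly in front of `a`, which moves in direction `d`. -/
def Front (d a b : ℝ × ℝ) : Prop :=
  1 ≤ fwd d a b ∧ fwd d a b < 2 ∧ -1 < side d a b ∧ side d a b < 1

def CornL (d a b : ℝ × ℝ) : Prop :=
  1 ≤ fwd d a b ∧ fwd d a b < 2 ∧ 1 ≤ side d a b ∧ side d a b < 2

def CornR (d a b : ℝ × ℝ) : Prop :=
  1 ≤ fwd d a b ∧ fwd d a b < 2 ∧ -2 < side d a b ∧ side d a b ≤ -1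

def Far (d a b : ℝ × ℝ) : Prop :=
  2 ≤ fwd d a b ∧ fwd d a b < 3 ∧ -1 < side d a b ∧ side d a b < 1

def Sec (d a b : ℝ × ℝ) : Prop := CornL d a b ∨ CornR d a b ∨ Far d a b

theorem pair_cases {a b d e : ℝ × ℝ} (hd : IsDir d) (he : IsDir e) (h0 : ¬ Ov a b) {t : ℝ}
    (t0 : 0 ≤ t) (t1 : t ≤ 1) (h : Ov (a + t • d) (b + t • e)) :
    Front d a b ∨ Front e b a ∨ (Sec d a b ∧ Sec e b a ∧ Ov (a + d) (b + e)) := by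
  obtain ⟨a1, a2⟩ := a
  obtain ⟨b1, b2⟩ := b
  have h0' : b1 - a1 ≤ -1 ∨ 1 ≤ b1 - a1 ∨ b2 - a2 ≤ -1 ∨ 1 ≤ b2 - a2 := by
    by_contra hc
    push Not at hc
    obtain ⟨u1, u2, u3, u4⟩ := hc
    apply h0
    constructor <;> rw [abs_lt] <;> constructor <;> simp only <;> linarith
  clear h0
  rcases hd with rfl | rfl | rfl | rfl | rfl <;> rcases he with rfl | rfl | rfl | rfl | rfl <;>
    simp only [Ov, Front, Sec, CornL, CornR, Far, fwd, side, abs_lt, Prod.mk_add_mk, Prod.smul_mk,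
      smul_eq_mul, mul_zero, mul_one, mul_neg] at h ⊢ <;>
    obtain ⟨⟨k1, k2⟩, k3, k4⟩ := h <;>
    grind

theorem dir_sep {d a b c : ℝ × ℝ} (hd : IsDir d) (h : ¬ Ov b c)
    (hf : |fwd d a b - fwd d a c| < 1) :
    d = (0, 0) ∨ 1 ≤ |side d a b - side d a c| := by
  by_contra hc
  push Not at hc
  obtain ⟨hn, hs⟩ := hc
  apply h
  rcases hd with rfl | rfl | rfl | rfl | rfl <;>
    simp only [Ov, fwd, side, abs_lt, ne_eq, not_true_eq_false] at * <;>
    refine ⟨⟨?_, ?_⟩, ?_, ?_⟩ <;> linarith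

theorem fwd_zero (a b : ℝ × ℝ) : fwd (0, 0) a b = 0 := by simp [fwd]

open Classical in
theorem card_le_two {V : Type*} [Fintype V] (s : V → ℝ × ℝ)
    (hs : ∀ a b, a ≠ b → ¬ Ov (s a) (s b)) (d p : ℝ × ℝ) (hd : IsDir d)
    (f0 : ℝ) (hf0 : 1 ≤ f0) (P : V → Prop)
    (hP : ∀ v, P v → f0 ≤ fwd d p (s v) ∧ fwd d p (s v) < f0 + 1 ∧
      -1 < side d p (s v) ∧ side d p (s v) < 1) :
    (Finset.univ.filter P).card ≤ 2 := by
  by_contra hc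
  push Not at hc
  obtain ⟨x, y, z, hx, hy, hz, hxy, hxz, hyz⟩ := Finset.two_lt_card_iff.1 hc
  have hx := hP x (Finset.mem_filter.1 hx).2
  have hy := hP y (Finset.mem_filter.1 hy).2
  have hz := hP z (Finset.mem_filter.1 hz).2
  have hne : d ≠ (0, 0) := by
    rintro rfl
    rw [fwd_zero] at hx
    linarith [hx.1]
  have key : ∀ u v, u ≠ v → |fwd d p (s u) - fwd d p (s v)| < 1 →
      1 ≤ |side d p (s u) - side d p (s v)| := fun u v huv hf =>
    (dir_sep hd (hs u v huv) hf).resolve_left hne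
  have k1 := key x y hxy (by rw [abs_lt]; constructor <;> linarith [hx.1, hy.1, hx.2.1, hy.2.1])
  have k2 := key x z hxz (by rw [abs_lt]; constructor <;> linarith [hx.1, hz.1, hx.2.1, hz.2.1])
  have k3 := key y z hyz (by rw [abs_lt]; constructor <;> linarith [hz.1, hy.1, hz.2.1, hy.2.1])
  obtain ⟨-, -, hx1, hx2⟩ := hx
  obtain ⟨-, -, hy1, hy2⟩ := hy
  obtain ⟨-, -, hz1, hz2⟩ := hz
  rw [le_abs] at k1 k2 k3
  rcases k1 with k1 | k1 <;> rcases k2 with k2 | k2 <;> rcases k3 with k3 | k3 <;> linarith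

open Classical in
theorem card_le_one' {V : Type*} [Fintype V] (s : V → ℝ × ℝ)
    (hs : ∀ a b, a ≠ b → ¬ Ov (s a) (s b)) (d p : ℝ × ℝ) (hd : IsDir d) (P : V → Prop)
    (hP : ∀ v, P v → 1 ≤ fwd d p (s v) ∧ fwd d p (s v) < 2)
    (hQ : ∀ u v, P u → P v → side d p (s u) - side d p (s v) < 1) :
    (Finset.univ.filter P).card ≤ 1 := by
  by_contra hc
  push Not at hc
  obtain ⟨x, y, hx, hy, hxy⟩ := Finset.one_lt_card_iff.1 hc
  have px := (Finset.mem_filter.1 hx).2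
  have py := (Finset.mem_filter.1 hy).2
  have hx := hP x px
  have hy := hP y py
  have hne : d ≠ (0, 0) := by
    rintro rfl
    rw [fwd_zero] at hx
    linarith [hx.1]
  have k1 := (dir_sep (a := p) hd (hs x y hxy)
    (by rw [abs_lt]; constructor <;> linarith [hx.1, hy.1, hx.2, hy.2])).resolve_left hne
  rw [le_abs] at k1
  have q1 := hQ x y px py
  have q2 := hQ y x py px
  rcases k1 with k1 | k1 <;> linarith

open Classical in
/-- The charge that `a` takes for `b`. -/
noncomputable def wt (d a b : ℝ × ℝ) : ℕ :=
  4 * (if Front d a b then 1 else 0) + (if CornL d a b then 1 else 0) +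
    (if CornR d a b then 1 else 0) + (if Far d a b then 1 else 0)

theorem sum_wt_le {V : Type*} [Fintype V] (s : V → ℝ × ℝ)
    (hs : ∀ a b, a ≠ b → ¬ Ov (s a) (s b)) (d p : ℝ × ℝ) (hd : IsDir d) :
    ∑ v, wt d p (s v) ≤ 12 := by
  classical
  have h1 := card_le_two s hs d p hd 1 le_rfl (fun v => Front d p (s v))
    (fun v hv => ⟨hv.1, by linarith [hv.2.1], hv.2.2⟩)
  have h2 := card_le_two s hs d p hd 2 (by norm_num) (fun v => Far d p (s v))
    (fun v hv => ⟨hv.1, by linarith [hv.2.1], hv.2.2⟩)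
  have h3 := card_le_one' s hs d p hd (fun v => CornL d p (s v))
    (fun v hv => ⟨hv.1, hv.2.1⟩) (fun u v hu hv => by linarith [hu.2.2.2, hv.2.2.1])
  have h4 := card_le_one' s hs d p hd (fun v => CornR d p (s v))
    (fun v hv => ⟨hv.1, hv.2.1⟩) (fun u v hu hv => by linarith [hu.2.2.2, hv.2.2.1])
  simp only [Finset.card_filter] at h1 h2 h3 h4
  simp only [wt, Finset.sum_add_distrib, ← Finset.mul_sum]
  have e : ∀ (P : V → Prop) (i1 i2 : DecidablePred P),
      (∑ v, @ite ℕ (P v) (i1 v) 1 0) = ∑ v, @ite ℕ (P v) (i2 v) 1 0 := by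
    intro P i1 i2
    congr!
  linarith

theorem wt_zero (a b : ℝ × ℝ) : wt (0, 0) a b = 0 := by
  have h1 : ¬ Front (0, 0) a b := fun h => by have := h.1; rw [fwd_zero] at this; linarith
  have h2 : ¬ CornL (0, 0) a b := fun h => by have := h.1; rw [fwd_zero] at this; linarith
  have h3 : ¬ CornR (0, 0) a b := fun h => by have := h.1; rw [fwd_zero] at this; linarith
  have h4 : ¬ Far (0, 0) a b := fun h => by have := h.1; rw [fwd_zero] at this; linarith
  simp [wt, h1, h2, h3, h4]

theorem wt_front {d a b : ℝ × ℝ} (h : Front d a b) : 4 ≤ wt d a b := by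
  simp only [wt, if_pos h]; omega

theorem wt_sec {d a b : ℝ × ℝ} (h : Sec d a b) : 1 ≤ wt d a b := by
  rcases h with h | h | h <;> simp only [wt, if_pos h] <;> omega

theorem wt_pair {a b d e : ℝ × ℝ} (hd : IsDir d) (he : IsDir e) (h0 : ¬ Ov a b) {t : ℝ}
    (t0 : 0 ≤ t) (t1 : t ≤ 1) (h : Ov (a + t • d) (b + t • e)) :
    4 ≤ wt d a b + wt e b a ∨ (2 ≤ wt d a b + wt e b a ∧ Ov (a + d) (b + e)) := by
  rcases pair_cases hd he h0 t0 t1 h with h | h | ⟨h, h', h''⟩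
  · left; have := wt_front h; omega
  · left; have := wt_front h; omega
  · right; have := wt_sec h; have := wt_sec h'; exact ⟨by omega, h''⟩

theorem isDir_of_sharesEdge {a b : ℝ × ℝ} (h : SharesEdge a b) : IsDir (b - a) := by
  obtain ⟨a1, a2⟩ := a
  obtain ⟨b1, b2⟩ := b
  simp only [SharesEdge, IsDir, Prod.mk_sub_mk, Prod.mk.injEq] at *
  rcases h with ⟨h, h' | h'⟩ | ⟨h, h' | h'⟩
  · right; right; right; left; constructor <;> linarith
  · right; right; left; constructor <;> linarith
  · right; left; constructor <;> linarith
  · left; constructor <;> linarith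

theorem sharesEdge_symm {a b : ℝ × ℝ} (h : SharesEdge a b) : SharesEdge b a := by
  unfold SharesEdge at *
  grind

theorem dir1 (m : Movement) : IsDir (m.I - m.S) := by
  rcases m.legs with ⟨h, h'⟩ | ⟨h, -⟩
  · rw [h]; exact isDir_of_sharesEdge h'
  · exact isDir_of_sharesEdge h

theorem dir2 (m : Movement) : IsDir (m.I - m.E) := by
  rcases m.legs with ⟨h, h'⟩ | ⟨-, h, -⟩
  · rw [h, sub_self]; right; right; right; right; rfl
  · exact isDir_of_sharesEdge (sharesEdge_symm h)

section
variable {k n : ℕ} (T : TransitionInstance k n)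

def s1 : Fin k ⊕ Fin n → ℝ × ℝ := Sum.elim T.stat (fun j => (T.mov j).S)
def s2 : Fin k ⊕ Fin n → ℝ × ℝ := Sum.elim T.stat (fun j => (T.mov j).E)
def d1 : Fin k ⊕ Fin n → ℝ × ℝ := Sum.elim (fun _ => (0, 0)) (fun j => (T.mov j).I - (T.mov j).S)
def d2 : Fin k ⊕ Fin n → ℝ × ℝ := Sum.elim (fun _ => (0, 0)) (fun j => (T.mov j).I - (T.mov j).E)

theorem mid (a : Fin k ⊕ Fin n) : s1 T a + d1 T a = s2 T a + d2 T a := by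
  rcases a with a | a <;> simp [s1, s2, d1, d2]

theorem d1_dir (a : Fin k ⊕ Fin n) : IsDir (d1 T a) := by
  rcases a with a | a
  · right; right; right; right; rfl
  · exact dir1 _

theorem d2_dir (a : Fin k ⊕ Fin n) : IsDir (d2 T a) := by
  rcases a with a | a
  · right; right; right; right; rfl
  · exact dir2 _

theorem traj_cases (t : ℝ) :
    (∃ u : ℝ, 0 ≤ u ∧ u ≤ 1 ∧ ∀ a, traj T (fun _ => 0) t a = s1 T a + u • d1 T a) ∨
    (∃ u : ℝ, 0 ≤ u ∧ u ≤ 1 ∧ ∀ a, traj T (fun _ => 0) t a = s2 T a + u • d2 T a) := by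
  have hz : ∀ u : ℝ, u • ((0, 0) : ℝ × ℝ) = 0 := fun u => by ext <;> simp
  by_cases h0 : t ≤ 0
  · left
    refine ⟨0, le_rfl, zero_le_one, ?_⟩
    rintro (a | a) <;> simp [traj, s1, d1, Movement.pos, h0]
  by_cases h1 : t ≤ 1
  · left
    refine ⟨t, by linarith, h1, ?_⟩
    rintro (a | a) <;> simp [traj, s1, d1, Movement.pos, h0, h1]
  by_cases h2 : t ≤ 2
  · right
    refine ⟨2 - t, by linarith, by linarith, ?_⟩
    rintro (a | a)
    · simp [traj, s2, d2]
    · simp only [traj, s2, d2, Movement.pos, Sum.elim_inr, sub_zero, h0, h1, h2, if_true, if_false]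
      ext <;> simp <;> ring
  · right
    refine ⟨0, le_rfl, zero_le_one, ?_⟩
    rintro (a | a) <;> simp [traj, s2, d2, Movement.pos, h0, h1, h2]

noncomputable def tot (a b : Fin k ⊕ Fin n) : ℕ :=
  wt (d1 T a) (s1 T a) (s1 T b) + wt (d2 T a) (s2 T a) (s2 T b)

theorem s1_free (a b : Fin k ⊕ Fin n) (h : a ≠ b) : ¬ Ov (s1 T a) (s1 T b) := by
  rw [← overlap_iff]; exact T.free_start a b h

theorem s2_free (a b : Fin k ⊕ Fin n) (h : a ≠ b) : ¬ Ov (s2 T a) (s2 T b) := by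
  rw [← overlap_iff]; exact T.free_end a b h

theorem tot_pair {a b : Fin k ⊕ Fin n} (hab : a ≠ b) {t : ℝ}
    (h : Overlap (traj T (fun _ => 0) t a) (traj T (fun _ => 0) t b)) :
    4 ≤ tot T a b + tot T b a := by
  rw [overlap_iff] at h
  have f1 := s1_free T a b hab
  have f2 := s2_free T a b hab
  have hm : Ov (s1 T a + d1 T a) (s1 T b + d1 T b) → 4 ≤ tot T a b + tot T b a := by
    intro hm
    have hm' := hm
    rw [mid, mid] at hm'
    have r1 := wt_pair (d1_dir T a) (d1_dir T b) f1 zero_le_one le_rfl (by simpa using hm)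
    have r2 := wt_pair (d2_dir T a) (d2_dir T b) f2 zero_le_one le_rfl (by simpa using hm')
    unfold tot
    omega
  rcases traj_cases T t with ⟨u, u0, u1, hu⟩ | ⟨u, u0, u1, hu⟩
  · rw [hu, hu] at h
    rcases wt_pair (d1_dir T a) (d1_dir T b) f1 u0 u1 h with r | ⟨-, r⟩
    · unfold tot; omega
    · exact hm r
  · rw [hu, hu] at h
    rcases wt_pair (d2_dir T a) (d2_dir T b) f2 u0 u1 h with r | ⟨-, r⟩
    · unfold tot; omega
    · rw [← mid, ← mid] at r
      exact hm r

theorem sum_tot_le : ∑ a, ∑ b, tot T a b ≤ 24 * n := by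
  rw [Fintype.sum_sum_type]
  have h1 : ∑ x : Fin k, ∑ b, tot T (Sum.inl x) b = 0 := by
    refine Finset.sum_eq_zero fun x _ => Finset.sum_eq_zero fun b _ => ?_
    simp [tot, d1, d2, wt_zero]
  have h2 : ∑ x : Fin n, ∑ b, tot T (Sum.inr x) b ≤ ∑ x : Fin n, 24 := by
    refine Finset.sum_le_sum fun x _ => ?_
    simp only [tot, Finset.sum_add_distrib]
    have := sum_wt_le (s1 T) (s1_free T) _ (s1 T (Sum.inr x)) (d1_dir T (Sum.inr x))
    have := sum_wt_le (s2 T) (s2_free T) _ (s2 T (Sum.inr x)) (d2_dir T (Sum.inr x))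
    omega
  rw [Finset.sum_const, Finset.card_univ, Fintype.card_fin, smul_eq_mul] at h2
  omega

/-- The graph of overlapping labels. -/
def gr : SimpleGraph (Fin k ⊕ Fin n) where
  Adj a b := a ≠ b ∧ ∃ t : ℝ, Overlap (traj T (fun _ => 0) t a) (traj T (fun _ => 0) t b)
  symm := ⟨by
    rintro a b ⟨h, t, ht⟩
    refine ⟨h.symm, t, ?_⟩
    unfold Overlap at *
    rwa [Set.inter_comm]⟩
  loopless := ⟨fun a h => h.1 rfl⟩

theorem count_eq : overlapCount T (fun _ => 0) = (gr T).edgeSet.ncard := by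
  unfold overlapCount
  congr 1
  ext q
  induction q using Sym2.ind with
  | _ x y =>
    rw [SimpleGraph.mem_edgeSet, Set.mem_ofPred_eq]
    constructor
    · rintro ⟨a, b, hq, h⟩
      have hab : (gr T).Adj a b := h
      rw [← SimpleGraph.mem_edgeSet] at hab ⊢
      rwa [hq]
    · intro h
      exact ⟨x, y, rfl, h⟩

end

end LabelAux

/-- In a simultaneous transition (all movements start at time `0`) with `n` moving labels,
at most `6 n` overlaps occur during the transition. -/
theorem simultaneous_overlaps_le {k n : ℕ} (T : TransitionInstance k n) :
    overlapCount T (fun _ => 0) ≤ 6 * n := by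
  classical
  rw [LabelAux.count_eq]
  have h2 := (LabelAux.gr T).two_mul_card_edgeFinset
  rw [← SimpleGraph.coe_edgeFinset, Set.ncard_coe_finset]
  have key : 4 * (Finset.univ.filter
      fun x : (Fin k ⊕ Fin n) × (Fin k ⊕ Fin n) => (LabelAux.gr T).Adj x.1 x.2).card ≤
      ∑ x : (Fin k ⊕ Fin n) × (Fin k ⊕ Fin n),
        (LabelAux.tot T x.1 x.2 + LabelAux.tot T x.2 x.1) := by
    rw [Finset.card_filter, Finset.mul_sum]
    refine Finset.sum_le_sum fun x _ => ?_
    split_ifs with h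
    · obtain ⟨hne, t, ht⟩ := h
      simpa using LabelAux.tot_pair T hne ht
    · simp
  rw [Finset.sum_add_distrib, Fintype.sum_prod_type, Fintype.sum_prod_type_right] at key
  have h3 := LabelAux.sum_tot_le T
  simp only at key h2
  omega
end

section
/- Let all labels be closed axis-aligned rectangles whose widths lie between σx_min and σx_max and whose heights lie between σy_min and σy_max, where 0 < σx_min ≤ σx_max and 0 < σy_min ≤ σy_max. If exactly one label lᵢ performs a movement from its start position to its end position (candidate positions of its point pᵢ), while every other label is stationary, the stationary labels are pairwise non-overlapping, and each stationary label is non-overlapping with both the start and end positions of lᵢ, then at most ⌈σx_max/σx_min⌉ · ⌈σy_max/σy_min⌉ stationary labels overlap lᵢ at some moment during the movement. -/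
open Set

/-- The closed axis-aligned rectangle with lower-left corner `a`, width `w` and height `h`. -/
def rectLabel (a : ℝ × ℝ) (w h : ℝ) : Set (ℝ × ℝ) :=
  Set.Icc a.1 (a.1 + w) ×ˢ Set.Icc a.2 (a.2 + h)

/-- Two rectangular labels overlap if their interiors intersect. -/
def ROverlap (a : ℝ × ℝ) (w h : ℝ) (b : ℝ × ℝ) (w' h' : ℝ) : Prop :=
  (interior (rectLabel a w h) ∩ interior (rectLabel b w' h')).Nonempty

/-- `a` is the lower-left corner of one of the four candidate positions of point `p` for a
label of width `w` and height `h` (the four closed rectangles having `p` as a corner). -/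
def IsCandidateR (w h : ℝ) (p a : ℝ × ℝ) : Prop :=
  a = p ∨ a = (p.1 - w, p.2) ∨ a = (p.1, p.2 - h) ∨ a = (p.1 - w, p.2 - h)

/-- Two candidate rectangles of dimensions `w × h` (given by lower-left corners) share an edge. -/
def SharesEdgeR (w h : ℝ) (a b : ℝ × ℝ) : Prop :=
  (a.1 = b.1 ∧ (a.2 - b.2 = h ∨ b.2 - a.2 = h)) ∨
  (a.2 = b.2 ∧ (a.1 - b.1 = w ∨ b.1 - a.1 = w))

/-- A movement of a `w × h` rectangular label of point `p` from candidate position `S` to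
candidate position `E`.  If `S` and `E` share an edge we set `I = E` and the label translates
directly from `S` to `E`; if `S` and `E` are diagonally opposite the label translates through
the specified intermediate candidate position `I`, sharing an edge with both `S` and `E`. -/
structure RMovement (w h : ℝ) where
  p : ℝ × ℝ
  S : ℝ × ℝ
  I : ℝ × ℝ
  E : ℝ × ℝ
  candS : IsCandidateR w h p S
  candI : IsCandidateR w h p I
  candE : IsCandidateR w h p E
  legs : (I = E ∧ SharesEdgeR w h S E) ∨
    (SharesEdgeR w h S I ∧ SharesEdgeR w h I E ∧ S.1 ≠ E.1 ∧ S.2 ≠ E.2)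

/-- Position (lower-left corner) of the moving rectangular label at time `t` after the start of
its movement, one axis-aligned translation at a time: first from `S` to `I` during `[0,1]`,
then from `I` to `E` during `[1,2]`; before the movement the label rests at its start position
and after the movement at its end position. -/
noncomputable def RMovement.pos {w h : ℝ} (m : RMovement w h) (t : ℝ) : ℝ × ℝ :=
  if t ≤ 0 then m.S
  else if t ≤ 1 then m.S + t • (m.I - m.S)
  else if t ≤ 2 then m.I + (t - 1) • (m.E - m.I)
  else m.E

/-- Coordinate description of overlap for rectangles of positive dimensions. -/
lemma rOverlap_iff {a b : ℝ × ℝ} {w h w' h' : ℝ} (hw : 0 < w) (hh : 0 < h) (hw' : 0 < w')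
    (hh' : 0 < h') : ROverlap a w h b w' h' ↔
      (a.1 < b.1 + w' ∧ b.1 < a.1 + w) ∧ (a.2 < b.2 + h' ∧ b.2 < a.2 + h) := by
  unfold ROverlap rectLabel
  rw [interior_prod_eq, interior_prod_eq, interior_Icc, interior_Icc, interior_Icc, interior_Icc,
    Set.prod_inter_prod, Set.prod_nonempty_iff, Set.Ioo_inter_Ioo, Set.Ioo_inter_Ioo,
    Set.nonempty_Ioo, Set.nonempty_Ioo]
  simp only [sup_lt_iff, lt_inf_iff]
  constructor
  · rintro ⟨⟨⟨_, h1⟩, h2, _⟩, ⟨_, h3⟩, h4, _⟩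
    exact ⟨⟨h2, h1⟩, h4, h3⟩
  · rintro ⟨⟨h1, h2⟩, h3, h4⟩
    exact ⟨⟨⟨by linarith, h2⟩, h1, by linarith⟩, ⟨by linarith, h4⟩, h3, by linarith⟩

/-- During a single translation, anything hit overlaps one of the end positions. -/
lemma leg_overlap_s15 {x A B : ℝ × ℝ} {w h w' h' s : ℝ} (hw : 0 < w) (hh : 0 < h) (hw' : 0 < w')
    (hh' : 0 < h') (hs0 : 0 ≤ s) (hs1 : s ≤ 1) (hAB : A = B ∨ SharesEdgeR w h A B)
    (ho : ROverlap x w' h' (A + s • (B - A)) w h) :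
    ROverlap x w' h' A w h ∨ ROverlap x w' h' B w h := by
  rcases hAB with rfl | hAB
  · left; simpa using ho
  rw [rOverlap_iff hw' hh' hw hh] at ho ⊢
  rw [rOverlap_iff hw' hh' hw hh]
  simp only [Prod.fst_add, Prod.snd_add, Prod.smul_fst, Prod.smul_snd, Prod.fst_sub,
    Prod.snd_sub, smul_eq_mul] at ho
  obtain ⟨⟨h1, h2⟩, h3, h4⟩ := ho
  have e1 : 0 ≤ s * h := by positivity
  have e2 : s * h ≤ h := by nlinarith
  have e3 : 0 ≤ s * w := by positivity
  have e4 : s * w ≤ w := by nlinarith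
  rcases hAB with ⟨e, e' | e'⟩ | ⟨e, e' | e'⟩
  · have k : B.2 - A.2 = -h := by linarith
    rw [k] at h3 h4
    rw [e, sub_self, mul_zero, add_zero] at h1 h2
    rw [e]
    by_cases c : x.2 < B.2 + h
    · right; refine ⟨⟨h1, h2⟩, c, by linarith⟩
    · left; refine ⟨⟨h1, h2⟩, by linarith, by linarith⟩
  · rw [e'] at h3 h4
    rw [e, sub_self, mul_zero, add_zero] at h1 h2
    rw [e]
    by_cases c : x.2 < A.2 + h
    · left; refine ⟨⟨h1, h2⟩, c, by linarith⟩
    · right; refine ⟨⟨h1, h2⟩, by linarith, by linarith⟩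
  · have k : B.1 - A.1 = -w := by linarith
    rw [k] at h1 h2
    rw [e, sub_self, mul_zero, add_zero] at h3 h4
    rw [e]
    by_cases c : x.1 < B.1 + w
    · right; refine ⟨⟨c, by linarith⟩, h3, h4⟩
    · left; refine ⟨⟨by linarith, by linarith⟩, h3, h4⟩
  · rw [e'] at h1 h2
    rw [e, sub_self, mul_zero, add_zero] at h3 h4
    rw [e]
    by_cases c : x.1 < A.1 + w
    · left; refine ⟨⟨c, by linarith⟩, h3, h4⟩
    · right; refine ⟨⟨by linarith, by linarith⟩, h3, h4⟩

/-- One-dimensional coordinate: intervals meeting `(c, c+w)` but not its translate by `±w` get an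
index below `⌈M/σ⌉₊` such that equal indices force the intervals to meet. -/
lemma index_exists {ι : Type*} (a l : ι → ℝ) {c c' w σ M : ℝ} (hσ : 0 < σ) (hw0 : 0 < w) (hw : w ≤ M)
    (hl : ∀ i, σ ≤ l i) (hc : c - c' = w ∨ c' - c = w) :
    ∃ f : ι → ℕ,
      (∀ i, (a i < c + w ∧ c < a i + l i) → ¬ (a i < c' + w ∧ c' < a i + l i) →
        f i < ⌈M / σ⌉₊) ∧
      (∀ i j, (a i < c + w ∧ c < a i + l i) → ¬ (a i < c' + w ∧ c' < a i + l i) →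
        (a j < c + w ∧ c < a j + l j) → ¬ (a j < c' + w ∧ c' < a j + l j) →
        f i = f j → a i < a j + l j ∧ a j < a i + l i) := by
  obtain ⟨u, hu, huv⟩ : ∃ u : ι → ℝ,
      (∀ i, (a i < c + w ∧ c < a i + l i) → ¬ (a i < c' + w ∧ c' < a i + l i) →
        0 < u i ∧ u i ≤ w) ∧
      (∀ i j, u i - u j < σ → u j - u i < σ → a i < a j + l j ∧ a j < a i + l i) := by
    rcases hc with hc | hc
    · refine ⟨fun i => c + w - a i, ?_, ?_⟩
      · rintro i ⟨h1, h2⟩ h3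
        refine ⟨by linarith, ?_⟩
        by_contra h4
        simp only [not_le] at h4
        exact h3 ⟨by linarith, by linarith⟩
      · intro i j h1 h2
        have := hl i
        have := hl j
        constructor <;> linarith
    · refine ⟨fun i => a i + l i - c, ?_, ?_⟩
      · rintro i ⟨h1, h2⟩ h3
        refine ⟨by linarith, ?_⟩
        by_contra h4
        simp only [not_le] at h4
        exact h3 ⟨by linarith, by linarith⟩
      · intro i j h1 h2
        have := hl i
        have := hl j
        constructor <;> linarith
  have key : ∀ i, 0 < u i → 1 ≤ ⌈u i / σ⌉₊ := fun i hi =>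
    Nat.one_le_iff_ne_zero.2 (Nat.ceil_pos.2 (div_pos hi hσ)).ne'
  refine ⟨fun i => ⌈u i / σ⌉₊ - 1, ?_, ?_⟩
  · intro i h1 h2
    obtain ⟨h3, h4⟩ := hu i h1 h2
    have h5 := key i h3
    have h6 : ⌈u i / σ⌉₊ ≤ ⌈M / σ⌉₊ := Nat.ceil_mono (by gcongr; linarith)
    show ⌈u i / σ⌉₊ - 1 < _
    omega
  · intro i j h1 h2 h3 h4 he
    have hi := (hu i h1 h2).1
    have hj := (hu j h3 h4).1
    have ki := key i hi
    have kj := key j hj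
    have he' : ⌈u i / σ⌉₊ = ⌈u j / σ⌉₊ := by
      have : ⌈u i / σ⌉₊ - 1 = ⌈u j / σ⌉₊ - 1 := he
      omega
    have bi := Nat.ceil_lt_add_one (div_pos hi hσ).le
    have bj := Nat.ceil_lt_add_one (div_pos hj hσ).le
    have ci := Nat.le_ceil (u i / σ)
    have cj := Nat.le_ceil (u j / σ)
    rw [he'] at bi ci
    apply huv
    · have : (u i - u j) / σ < 1 := by rw [sub_div]; linarith
      rwa [div_lt_one hσ] at this
    · have : (u j - u i) / σ < 1 := by rw [sub_div]; linarith
      rwa [div_lt_one hσ] at this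

/-- Counting core: labels overlapping `I` but neither its horizontal neighbour `H` nor its
vertical neighbour `V`. -/
lemma core_count {σxmin σxmax σymin σymax : ℝ} (hx0 : 0 < σxmin) (hy0 : 0 < σymin)
    {w h : ℝ} (hw₁ : σxmin ≤ w) (hw₂ : w ≤ σxmax) (hh₁ : σymin ≤ h) (hh₂ : h ≤ σymax)
    {I H V : ℝ × ℝ} (hH : I.2 = H.2 ∧ (I.1 - H.1 = w ∨ H.1 - I.1 = w))
    (hV : I.1 = V.1 ∧ (I.2 - V.2 = h ∨ V.2 - I.2 = h))
    {ι : Type*} [Fintype ι] {wd hd : ι → ℝ} {stat : ι → ℝ × ℝ}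
    (hdims : ∀ i : ι, σxmin ≤ wd i ∧ σymin ≤ hd i)
    (hfree : ∀ i j : ι, i ≠ j →
      ¬ ROverlap (stat i) (wd i) (hd i) (stat j) (wd j) (hd j))
    (hnH : ∀ i : ι, ¬ ROverlap (stat i) (wd i) (hd i) H w h)
    (hnV : ∀ i : ι, ¬ ROverlap (stat i) (wd i) (hd i) V w h) :
    {i : ι | ROverlap (stat i) (wd i) (hd i) I w h}.ncard ≤
      ⌈σxmax / σxmin⌉₊ * ⌈σymax / σymin⌉₊ := by
  have pw : 0 < w := by linarith
  have ph : 0 < h := by linarith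
  have pwd : ∀ i, 0 < wd i := fun i => hx0.trans_le (hdims i).1
  have phd : ∀ i, 0 < hd i := fun i => hy0.trans_le (hdims i).2
  obtain ⟨f, f1, f2⟩ := index_exists (fun i => (stat i).1) wd hx0 pw hw₂ (fun i => (hdims i).1) hH.2
  obtain ⟨g, g1, g2⟩ := index_exists (fun i => (stat i).2) hd hy0 ph hh₂ (fun i => (hdims i).2) hV.2
  have hsplit : ∀ i, ROverlap (stat i) (wd i) (hd i) I w h →
      (((stat i).1 < I.1 + w ∧ I.1 < (stat i).1 + wd i) ∧
        ¬ ((stat i).1 < H.1 + w ∧ H.1 < (stat i).1 + wd i)) ∧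
      (((stat i).2 < I.2 + h ∧ I.2 < (stat i).2 + hd i) ∧
        ¬ ((stat i).2 < V.2 + h ∧ V.2 < (stat i).2 + hd i)) := by
    intro i hi
    rw [rOverlap_iff (pwd i) (phd i) pw ph] at hi
    have n1 := hnH i
    have n2 := hnV i
    rw [rOverlap_iff (pwd i) (phd i) pw ph] at n1 n2
    rw [← hH.1] at n1
    rw [← hV.1] at n2
    exact ⟨⟨hi.1, fun k => n1 ⟨k, hi.2⟩⟩, hi.2, fun k => n2 ⟨hi.1, k⟩⟩
  let T : Finset (ℕ × ℕ) := Finset.range ⌈σxmax / σxmin⌉₊ ×ˢ Finset.range ⌈σymax / σymin⌉₊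
  have hT : (T : Set (ℕ × ℕ)).ncard = ⌈σxmax / σxmin⌉₊ * ⌈σymax / σymin⌉₊ := by
    rw [Set.ncard_coe_finset, Finset.card_product, Finset.card_range, Finset.card_range]
  rw [← hT]
  refine Set.ncard_le_ncard_of_injOn (fun i => (f i, g i)) ?_ ?_ T.finite_toSet
  · intro i hi
    obtain ⟨⟨a1, a2⟩, a3, a4⟩ := hsplit i hi
    simp only [T, Finset.coe_product, Set.mem_prod, Finset.coe_range, Set.mem_Iio]
    exact ⟨f1 i a1 a2, g1 i a3 a4⟩
  · intro i hi j hj hij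
    obtain ⟨⟨a1, a2⟩, a3, a4⟩ := hsplit i hi
    obtain ⟨⟨b1, b2⟩, b3, b4⟩ := hsplit j hj
    have e1 : f i = f j := congrArg Prod.fst hij
    have e2 : g i = g j := congrArg Prod.snd hij
    by_contra hne
    apply hfree i j hne
    rw [rOverlap_iff (pwd i) (phd i) (pwd j) (phd j)]
    exact ⟨f2 i j a1 a2 b1 b2 e1, g2 i j a3 a4 b3 b4 e2⟩

/-- Let all labels be closed axis-aligned rectangles whose widths lie between `σxmin` and
`σxmax` and whose heights lie between `σymin` and `σymax`.  If exactly one label performs a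
movement from its start position to its end position while every other label is stationary,
the stationary labels are pairwise non-overlapping, and each stationary label overlaps neither
the start nor the end position of the moving label, then at most
`⌈σxmax / σxmin⌉ * ⌈σymax / σymin⌉` stationary labels overlap the moving label at some moment
during the movement. -/
theorem rect_overlaps_le (σxmin σxmax σymin σymax : ℝ)
    (hx0 : 0 < σxmin) (hx : σxmin ≤ σxmax) (hy0 : 0 < σymin) (hy : σymin ≤ σymax)
    (w h : ℝ) (hw₁ : σxmin ≤ w) (hw₂ : w ≤ σxmax) (hh₁ : σymin ≤ h) (hh₂ : h ≤ σymax)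
    (m : RMovement w h)
    (ι : Type*) [Fintype ι] (wd hd : ι → ℝ) (stat : ι → ℝ × ℝ)
    (hdims : ∀ i : ι, σxmin ≤ wd i ∧ wd i ≤ σxmax ∧ σymin ≤ hd i ∧ hd i ≤ σymax)
    (hfree : ∀ i j : ι, i ≠ j →
      ¬ ROverlap (stat i) (wd i) (hd i) (stat j) (wd j) (hd j))
    (hS : ∀ i : ι, ¬ ROverlap (stat i) (wd i) (hd i) m.S w h)
    (hE : ∀ i : ι, ¬ ROverlap (stat i) (wd i) (hd i) m.E w h) :
    {i : ι | ∃ t : ℝ, ROverlap (stat i) (wd i) (hd i) (m.pos t) w h}.ncard ≤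
      ⌈σxmax / σxmin⌉₊ * ⌈σymax / σymin⌉₊ := by
  have pw : 0 < w := by linarith
  have ph : 0 < h := by linarith
  have pwd : ∀ i, 0 < wd i := fun i => hx0.trans_le (hdims i).1
  have phd : ∀ i, 0 < hd i := fun i => hy0.trans_le (hdims i).2.2.1
  have hd' : ∀ i : ι, σxmin ≤ wd i ∧ σymin ≤ hd i := fun i => ⟨(hdims i).1, (hdims i).2.2.1⟩
  have l1 : m.S = m.I ∨ SharesEdgeR w h m.S m.I := by
    rcases m.legs with ⟨e, k⟩ | ⟨k, _⟩
    · right; rw [e]; exact k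
    · exact Or.inr k
  have l2 : m.I = m.E ∨ SharesEdgeR w h m.I m.E := by
    rcases m.legs with ⟨e, _⟩ | ⟨_, k, _⟩
    · exact Or.inl e
    · exact Or.inr k
  have hI : ∀ i t, ROverlap (stat i) (wd i) (hd i) (m.pos t) w h →
      ROverlap (stat i) (wd i) (hd i) m.I w h := by
    intro i t ho
    unfold RMovement.pos at ho
    split_ifs at ho with t0 t1 t2
    · exact absurd ho (hS i)
    · rcases leg_overlap_s15 pw ph (pwd i) (phd i) (by linarith) t1 l1 ho with k | k
      · exact absurd k (hS i)
      · exact k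
    · rcases leg_overlap_s15 pw ph (pwd i) (phd i) (by linarith) (by linarith) l2 ho with k | k
      · exact k
      · exact absurd k (hE i)
    · exact absurd ho (hE i)
  have hsub : {i : ι | ∃ t : ℝ, ROverlap (stat i) (wd i) (hd i) (m.pos t) w h} ⊆
      {i : ι | ROverlap (stat i) (wd i) (hd i) m.I w h} := fun i ⟨t, ht⟩ => hI i t ht
  refine (Set.ncard_le_ncard hsub (Set.toFinite _)).trans ?_
  rcases m.legs with ⟨e, _⟩ | ⟨k1, k2, n1, n2⟩
  · have : {i : ι | ROverlap (stat i) (wd i) (hd i) m.I w h} = ∅ := by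
      ext i
      simp only [Set.mem_setOf_eq, Set.mem_empty_iff_false, iff_false]
      rw [e]
      exact hE i
    rw [this, Set.ncard_empty]
    exact Nat.zero_le _
  · rcases k1 with ⟨a, a'⟩ | ⟨a, a'⟩ <;> rcases k2 with ⟨b, b'⟩ | ⟨b, b'⟩
    · exact absurd (a.trans b) n1
    · exact core_count hx0 hy0 hw₁ hw₂ hh₁ hh₂ ⟨b, b'⟩ ⟨a.symm, a'.symm⟩ hd' hfree hE hS
    · exact core_count hx0 hy0 hw₁ hw₂ hh₁ hh₂ ⟨a.symm, a'.symm⟩ ⟨b, b'⟩ hd' hfree hS hE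
    · exact absurd (a.trans b) n2
end
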